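/- arXiv:0801.4786 — 2 statements merged into one kernel-verified Lean document; each statement's English description precedes it below -/
import Mathlib

section
/- Let n ≥ 2 and let p be a prime. There exists a group homomorphism φ from the braid group B_n to GL(n,F) ⋊ S_n such that φ(σ_i) = g_i for every i = 1,…,n−1 (Lemma 1 of the paper: the elements g_i satisfy the braid relations and hence determine a representation of B_n). -/
/-- `F` : the field of fractions of the multivariate polynomial ring over `𝔽_p = ZMod p`
in variables `t_1, …, t_n` (0-indexed as `X 0, …, X (n-1)`). -/
noncomputable abbrev BurauField (n p : ℕ) : Type :=
  FractionRing (MvPolynomial (Fin n) (ZMod p))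

/-- The variable `t_i` (1-based index `i`, so `tvar n p (i-1)` is `t_i`) viewed inside
the fraction field. -/
noncomputable def tvar (n p : ℕ) (k : ℕ) : BurauField n p :=
  if h : k < n then
    algebraMap (MvPolynomial (Fin n) (ZMod p)) (BurauField n p) (MvPolynomial.X ⟨k, h⟩)
  else 0

/-- The colored Burau matrix `x_i(t)` (1-based index `i` with `1 ≤ i ≤ n-1`):
the identity matrix except for the `i`-th row, which has entries `t_i, -t_i, 1`
in columns `i-1, i, i+1` (with `-t_i` on the diagonal); for `i = 1` the first row
is `(-t_1, 1, 0, …, 0)`. -/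
noncomputable def colBurau (n p : ℕ) (i : ℕ) : Matrix (Fin n) (Fin n) (BurauField n p) :=
  Matrix.of fun r c =>
    if (r : ℕ) + 1 = i then
      if (c : ℕ) + 1 = i then -(tvar n p (i - 1))
      else if (c : ℕ) = i then 1
      else if (c : ℕ) + 2 = i then tvar n p (i - 1)
      else 0
    else if r = c then 1 else 0

/-- The action of a permutation `s ∈ S_n` on the fraction field, permuting the
variables `t_1, …, t_n`. -/
noncomputable def permF (n p : ℕ) (s : Equiv.Perm (Fin n)) : BurauField n p ≃+* BurauField n p :=
  IsFractionRing.ringEquivOfRingEquiv (MvPolynomial.renameEquiv (ZMod p) s).toRingEquiv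


/-- The braid relations on `n` strands: generators are indexed by `Fin (n-1)`
(index `i : Fin (n-1)` corresponds to the Artin generator `σ_{i+1}`), with relations
`σ_i σ_j σ_i = σ_j σ_i σ_j` for `|i-j| = 1` and `σ_i σ_j = σ_j σ_i` for `|i-j| > 1`. -/
def braidRels (n : ℕ) : Set (FreeGroup (Fin (n - 1))) :=
  {r | ∃ i j : Fin (n - 1),
    (((i : ℤ) - (j : ℤ)).natAbs = 1 ∧
      r = FreeGroup.of i * FreeGroup.of j * FreeGroup.of i *
          (FreeGroup.of j * FreeGroup.of i * FreeGroup.of j)⁻¹) ∨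
    (1 < ((i : ℤ) - (j : ℤ)).natAbs ∧
      r = FreeGroup.of i * FreeGroup.of j * (FreeGroup.of j * FreeGroup.of i)⁻¹)}

/-- The braid group `B_n` on `n` strands, presented by the Artin generators and the
braid relations. -/
abbrev BraidGroup (n : ℕ) : Type := PresentedGroup (braidRels n)

/-- The Artin generator `σ_{i+1}` of the braid group `B_n` (so `braidGen n ⟨i-1,_⟩`
is the paper's `σ_i`, `1 ≤ i ≤ n-1`). -/
def braidGen (n : ℕ) (i : Fin (n - 1)) : BraidGroup n := PresentedGroup.of i

/-!
Each colored Burau matrix is a rank-one perturbation `1 + e_i ⊗ f_i(t)` of the identity, where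
`f_i(t) = t e_{i-1} - (1 + t) e_i + e_{i+1}`. Products of such matrices are governed by the scalars
`f_i(t) ⬝ e_j`, which vanish for `|i - j| > 1`; this gives the far commutation relations. In the
semidirect product the permutations turn the braid relation for `j = i + 1` into
`x_i(a) x_j(a) x_i(b) = x_j(b) x_i(a) x_j(a)` with `a = t_i` and `b = t_j`, and expanding both sides
leaves exactly the fact that `f_j(a) + a f_i(b)` is symmetric in `a` and `b`.
-/

section RankOnePerturbation

open Matrix

variable {m R : Type*} [Fintype m] [DecidableEq m]

theorem commute_one_add_vecMulVec [Semiring R] {u v f g : m → R}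
    (hfv : f ⬝ᵥ v = 0) (hgu : g ⬝ᵥ u = 0) :
    Commute (1 + vecMulVec u f) (1 + vecMulVec v g) := by
  have huv : vecMulVec u f * vecMulVec v g = 0 := by
    rw [vecMulVec_mul_vecMulVec, hfv, zero_smul, vecMulVec_zero]
  have hvu : vecMulVec v g * vecMulVec u f = 0 := by
    rw [vecMulVec_mul_vecMulVec, hgu, zero_smul, vecMulVec_zero]
  have hcomm : Commute (vecMulVec u f) (vecMulVec v g) := huv.trans hvu.symm
  exact (Commute.one_left _).add_left ((Commute.one_right _).add_right hcomm)

theorem one_add_vecMulVec_braid [CommRing R] {u v f f' g g' : m → R} {a b : R}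
    (hfu : f ⬝ᵥ u = -(1 + a)) (hfv : f ⬝ᵥ v = 1) (hgu : g ⬝ᵥ u = a)
    (hgu' : g' ⬝ᵥ u = b) (hgv' : g' ⬝ᵥ v = -(1 + b)) (hfg : g + a • f' = g' + b • f) :
    (1 + vecMulVec u f) * (1 + vecMulVec v g) * (1 + vecMulVec u f') =
      (1 + vecMulVec v g') * (1 + vecMulVec u f) * (1 + vecMulVec v g) := by
  have hlhs : (1 + vecMulVec u f) * (1 + vecMulVec v g) * (1 + vecMulVec u f') =
      1 + vecMulVec u (f + g) + vecMulVec v (g + a • f') := by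
    simp only [add_mul, mul_add, one_mul, mul_one, vecMulVec_mul_vecMulVec, hfu, hfv, hgu,
      vecMulVec_add, vecMulVec_smul, one_smul]
    module
  have hrhs : (1 + vecMulVec v g') * (1 + vecMulVec u f) * (1 + vecMulVec v g) =
      1 + vecMulVec u (f + g) + vecMulVec v (g' + b • f) := by
    simp only [add_mul, mul_add, one_mul, mul_one, vecMulVec_mul_vecMulVec, hfv, hgu', hgv',
      vecMulVec_add, vecMulVec_smul, smul_mul_assoc, one_smul]
    module
  rw [hlhs, hrhs, hfg]

end RankOnePerturbation

section BurauMatrix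

open Matrix

variable {n : ℕ} {R : Type*}

/-- The vector `f_i(t) = t e_{i-1} - (1 + t) e_i + e_{i+1}`, which is the difference of the `i`-th
rows of the colored Burau matrix and of the identity. Terms whose index falls outside `Fin n` are
omitted. -/
def burauCovector [Ring R] (i : Fin n) (t : R) : Fin n → R := fun c =>
  if (c : ℕ) + 1 = i then t else if c = i then -(1 + t) else if (c : ℕ) = i + 1 then 1 else 0

/-- The colored Burau matrix with an arbitrary parameter `t`, written as a rank-one perturbation of
the identity. The index `i` counts from `0`, so row `i` has entries `t, -t, 1` in columns
`i - 1, i, i + 1`. -/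
def burauMatrix [Ring R] (i : Fin n) (t : R) : Matrix (Fin n) (Fin n) R :=
  1 + vecMulVec (Pi.single i 1) (burauCovector i t)

theorem burauMatrix_apply [Ring R] (i : Fin n) (t : R) (r c : Fin n) :
    burauMatrix i t r c =
      if r = i then
        if (c : ℕ) + 1 = i then t else if c = i then -t else if (c : ℕ) = i + 1 then 1 else 0
      else if r = c then 1 else 0 := by
  simp only [burauMatrix, burauCovector, Matrix.add_apply, one_apply, vecMulVec_apply,
    Pi.single_apply]
  grind

theorem burauMatrix_map {S : Type*} [Ring R] [Ring S] (f : R →+* S) (i : Fin n) (t : R) :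
    (burauMatrix i t).map f = burauMatrix i (f t) := by
  ext r c
  simp only [map_apply, burauMatrix_apply]
  split_ifs <;> simp

theorem burauMatrix_commute [Ring R] {i j : Fin n} (hij : (i : ℕ) + 1 < j) (a b : R) :
    Commute (burauMatrix i a) (burauMatrix j b) := by
  apply commute_one_add_vecMulVec <;>
  · rw [dotProduct_single_one, burauCovector]
    grind

theorem burauCovector_add_smul_comm [CommRing R] {i j : Fin n} (hij : (i : ℕ) + 1 = j) (a b : R) :
    burauCovector j a + a • burauCovector i b = burauCovector j b + b • burauCovector i a := by
  ext c
  simp only [burauCovector, Pi.add_apply, Pi.smul_apply, smul_eq_mul]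
  grind

theorem burauMatrix_braid [CommRing R] {i j : Fin n} (hij : (i : ℕ) + 1 = j) (a b : R) :
    burauMatrix i a * burauMatrix j a * burauMatrix i b =
      burauMatrix j b * burauMatrix i a * burauMatrix j a := by
  apply one_add_vecMulVec_braid (hfg := burauCovector_add_smul_comm hij a b) <;>
  · rw [dotProduct_single_one, burauCovector]
    grind

end BurauMatrix

theorem swap_mul_swap_braid {α : Type*} [DecidableEq α] {a b c : α} (hab : a ≠ b) (hac : a ≠ c)
    (hbc : b ≠ c) :
    Equiv.swap a b * Equiv.swap b c * Equiv.swap a b =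
      Equiv.swap b c * Equiv.swap a b * Equiv.swap b c := by
  rw [Equiv.swap_mul_swap_mul_swap hab hac, Equiv.swap_comm a b, Equiv.swap_comm b c,
    Equiv.swap_mul_swap_mul_swap hbc.symm hac.symm, Equiv.swap_comm]

section SemidirectProduct

variable {n : ℕ} {R : Type*} [CommRing R] {t : Fin n → R} {ψ : Equiv.Perm (Fin n) → R →+* R}
  {φ : Equiv.Perm (Fin n) →* MulAut (GL (Fin n) R)}

theorem coe_action_eq_burauMatrix (hψ : ∀ s k, ψ s (t k) = t (s k))
    (hφ : ∀ s m, (φ s m : Matrix (Fin n) (Fin n) R) = (m : Matrix (Fin n) (Fin n) R).map (ψ s))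
    {i : Fin n} {X : GL (Fin n) R} (hX : (X : Matrix (Fin n) (Fin n) R) = burauMatrix i (t i))
    (s : Equiv.Perm (Fin n)) :
    (φ s X : Matrix (Fin n) (Fin n) R) = burauMatrix i (t (s i)) := by
  rw [hφ, hX, burauMatrix_map, hψ]

theorem coloredBurau_braid (hψ : ∀ s k, ψ s (t k) = t (s k))
    (hφ : ∀ s m, (φ s m : Matrix (Fin n) (Fin n) R) = (m : Matrix (Fin n) (Fin n) R).map (ψ s))
    {i j k : Fin n} (hij : (i : ℕ) + 1 = j) (hjk : (j : ℕ) + 1 = k) {X Y : GL (Fin n) R}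
    (hX : (X : Matrix (Fin n) (Fin n) R) = burauMatrix i (t i))
    (hY : (Y : Matrix (Fin n) (Fin n) R) = burauMatrix j (t j)) :
    (⟨X, Equiv.swap i j⟩ * ⟨Y, Equiv.swap j k⟩ * ⟨X, Equiv.swap i j⟩ :
        GL (Fin n) R ⋊[φ] Equiv.Perm (Fin n)) =
      ⟨Y, Equiv.swap j k⟩ * ⟨X, Equiv.swap i j⟩ * ⟨Y, Equiv.swap j k⟩ := by
  have hij' : i ≠ j := by grind
  have hik : i ≠ k := by grind
  have hjk' : j ≠ k := by grind
  refine SemidirectProduct.ext (Units.ext ?_) (swap_mul_swap_braid hij' hik hjk')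
  simp only [SemidirectProduct.mul_left, SemidirectProduct.mul_right, Units.val_mul,
    coe_action_eq_burauMatrix hψ hφ hX, coe_action_eq_burauMatrix hψ hφ hY, hX, hY,
    Equiv.Perm.mul_apply, Equiv.swap_apply_left, Equiv.swap_apply_right,
    Equiv.swap_apply_of_ne_of_ne hij' hik]
  exact burauMatrix_braid hij (t i) (t j)

theorem coloredBurau_commute (hψ : ∀ s k, ψ s (t k) = t (s k))
    (hφ : ∀ s m, (φ s m : Matrix (Fin n) (Fin n) R) = (m : Matrix (Fin n) (Fin n) R).map (ψ s))
    {i i' j j' : Fin n} (hi : (i : ℕ) + 1 = i') (hj : (j : ℕ) + 1 = j') (hij : (i : ℕ) + 1 < j)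
    {X Y : GL (Fin n) R} (hX : (X : Matrix (Fin n) (Fin n) R) = burauMatrix i (t i))
    (hY : (Y : Matrix (Fin n) (Fin n) R) = burauMatrix j (t j)) :
    Commute (⟨X, Equiv.swap i i'⟩ : GL (Fin n) R ⋊[φ] Equiv.Perm (Fin n))
      ⟨Y, Equiv.swap j j'⟩ := by
  have hdisj : (Equiv.swap i i').Disjoint (Equiv.swap j j') :=
    Equiv.Perm.disjoint_swap_swap (by grind)
  have hsj : Equiv.swap i i' j = j := Equiv.swap_apply_of_ne_of_ne (by grind) (by grind)
  have hsi : Equiv.swap j j' i = i := Equiv.swap_apply_of_ne_of_ne (by grind) (by grind)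
  refine SemidirectProduct.ext (Units.ext ?_) hdisj.commute
  simp only [SemidirectProduct.mul_left, Units.val_mul, coe_action_eq_burauMatrix hψ hφ hX,
    coe_action_eq_burauMatrix hψ hφ hY, hX, hY, hsi, hsj]
  exact burauMatrix_commute hij (t i) (t j)

end SemidirectProduct

theorem BraidGroup.exists_hom_braidGen_eq {G : Type*} [Group G] {n : ℕ} (g : Fin (n - 1) → G)
    (hbraid : ∀ i j : Fin (n - 1), (i : ℕ) + 1 = j → g i * g j * g i = g j * g i * g j)
    (hcomm : ∀ i j : Fin (n - 1), (i : ℕ) + 1 < j → Commute (g i) (g j)) :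
    ∃ φ : BraidGroup n →* G, ∀ i, φ (braidGen n i) = g i := by
  have hrels : ∀ r ∈ braidRels n, FreeGroup.lift g r = 1 := by
    rintro r ⟨i, j, ⟨hd, rfl⟩ | ⟨hd, rfl⟩⟩ <;>
      simp only [map_mul, map_inv, FreeGroup.lift_apply_of, mul_inv_eq_one]
    · obtain h | h : (i : ℕ) + 1 = j ∨ (j : ℕ) + 1 = i := by omega
      · exact hbraid i j h
      · exact (hbraid j i h).symm
    · obtain h | h : (i : ℕ) + 1 < j ∨ (j : ℕ) + 1 < i := by omega
      · exact hcomm i j h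
      · exact (hcomm j i h).symm
  exact ⟨PresentedGroup.toGroup hrels, fun _ => PresentedGroup.toGroup.of hrels⟩

theorem permF_tvar (n p : ℕ) (s : Equiv.Perm (Fin n)) (k : Fin n) :
    permF n p s (tvar n p k) = tvar n p (s k) := by
  simp [permF, tvar]

theorem colBurau_succ (n p : ℕ) (i : Fin n) :
    colBurau n p (i + 1) = burauMatrix i (tvar n p i) := by
  ext r c
  simp only [colBurau, burauMatrix_apply, Matrix.of_apply, Nat.add_sub_cancel, Fin.ext_iff]
  split_ifs <;> first | rfl | omega

theorem exists_colored_burau_representation_general {R : Type*} [CommRing R] {n : ℕ}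
    (t : Fin n → R) (ψ : Equiv.Perm (Fin n) → R →+* R) (hψ : ∀ s k, ψ s (t k) = t (s k))
    (φ : Equiv.Perm (Fin n) →* MulAut (GL (Fin n) R))
    (hφ : ∀ s m, (φ s m : Matrix (Fin n) (Fin n) R) = (m : Matrix (Fin n) (Fin n) R).map (ψ s))
    (x : Fin (n - 1) → GL (Fin n) R)
    (hx : ∀ i, (x i : Matrix (Fin n) (Fin n) R) =
      burauMatrix (i.castLE (n.sub_le 1)) (t (i.castLE (n.sub_le 1)))) :
    ∃ φb : BraidGroup n →* (GL (Fin n) R ⋊[φ] Equiv.Perm (Fin n)),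
      ∀ i, φb (braidGen n i) =
        ⟨x i, Equiv.swap (i.castLE (n.sub_le 1)) ⟨i + 1, by omega⟩⟩ := by
  refine BraidGroup.exists_hom_braidGen_eq _ (fun i j hij => ?_) (fun i j hij => ?_)
  · have hj : (⟨i + 1, by omega⟩ : Fin n) = j.castLE (n.sub_le 1) := Fin.ext hij
    rw [hj]
    exact coloredBurau_braid hψ hφ hij rfl (hx i) (hx j)
  · exact coloredBurau_commute hψ hφ rfl rfl hij (hx i) (hx j)

/-- (Lemma 1) The elements `g_i = (x_i(t), s_i)`, `i = 1, …, n-1`, satisfy the braid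
relations and hence determine a representation of the braid group: there exists a group
homomorphism `φb : B_n → GL(n,F) ⋊ S_n` with `φb(σ_i) = g_i` for every `i = 1, …, n-1`.
Here `φ` is the action of `S_n` on `GL(n,F)` induced by permuting the variables
(characterized entrywise by `hφ`), `x i ∈ GL(n,F)` is the colored Burau matrix
(characterized by `hx`), and `s_i` is the transposition `(i, i+1)`
(0-indexed: `Equiv.swap ⟨i-1,_⟩ ⟨i,_⟩`). -/
theorem exists_colored_burau_representation (n p : ℕ) (hn : 2 ≤ n) (hp : p.Prime)
    (φ : Equiv.Perm (Fin n) →* MulAut (GL (Fin n) (BurauField n p)))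
    (hφ : ∀ (s : Equiv.Perm (Fin n)) (m : GL (Fin n) (BurauField n p)),
      ((φ s m : Matrix (Fin n) (Fin n) (BurauField n p)) =
        (m : Matrix (Fin n) (Fin n) (BurauField n p)).map (permF n p s)))
    (x : ℕ → GL (Fin n) (BurauField n p))
    (hx : ∀ i, 1 ≤ i → i ≤ n - 1 →
      ((x i : Matrix (Fin n) (Fin n) (BurauField n p)) = colBurau n p i)) :
    ∃ φb : BraidGroup n →* (GL (Fin n) (BurauField n p) ⋊[φ] Equiv.Perm (Fin n)),
      ∀ (i : ℕ) (h1 : 1 ≤ i) (h2 : i ≤ n - 1),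
        φb (braidGen n ⟨i - 1, by omega⟩) =
          ⟨x i, Equiv.swap ⟨i - 1, by omega⟩ ⟨i, by omega⟩⟩ := by
  obtain ⟨φb, hφb⟩ := exists_colored_burau_representation_general (fun k => tvar n p k)
    (fun s => (permF n p s : BurauField n p →+* BurauField n p)) (permF_tvar n p) φ hφ
    (fun i => x (i + 1)) fun i =>
      (hx _ (by omega) (by omega)).trans (colBurau_succ n p (i.castLE (n.sub_le 1)))
  refine ⟨φb, fun i h1 h2 => ?_⟩
  obtain ⟨k, rfl⟩ := Nat.exists_eq_add_of_le' h1
  exact hφb ⟨k, by omega⟩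
end

section
/- Let n ≥ 2, let Δ ∈ B_n be the half twist, and let ℓ be the geodesic length function on B_n. Let u ∈ B_n satisfy 2·ℓ(u) < n·(n−1). Then the sequence p ↦ ℓ(Δ^{2p}·u), indexed by the natural numbers p = 0, 1, 2, …, is strictly increasing. -/
/-- The half twist `Δ = (σ_1⋯σ_{n-1})·(σ_1⋯σ_{n-2})·⋯·(σ_1) ∈ B_n`. -/
def halfTwist (n : ℕ) : BraidGroup n :=
  (List.ofFn fun r : Fin (n - 1) =>
    (List.ofFn fun c : Fin (n - 1 - (r : ℕ)) =>
      braidGen n ⟨(c : ℕ), by have := c.isLt; omega⟩).prod).prod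

/-- The geodesic length `ℓ(g)` of a braid `g ∈ B_n`: the length of a shortest word over
the alphabet `{σ_1^{±1}, …, σ_{n-1}^{±1}}` representing `g`. -/
noncomputable def geodesicLength (n : ℕ) (g : BraidGroup n) : ℕ :=
  sInf {k | ∃ L : List (BraidGroup n), L.length = k ∧
    (∀ a ∈ L, ∃ i : Fin (n - 1), a = braidGen n i ∨ a = (braidGen n i)⁻¹) ∧ L.prod = g}

/-!
A homomorphism to `ℤ` that sends every generator to `1` is bounded in absolute value by the word
length, and on positive words the two agree. Hence, for `z` a product of generators of exponent
sum `e z`,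
`ℓ (z ^ p * u) ≤ p * e z + ℓ u < (p + 1) * e z - ℓ u ≤ e (z ^ (p + 1) * u) ≤ ℓ (z ^ (p + 1) * u)`
as soon as `2 * ℓ u < e z`. The full twist `Δ ^ 2` is such a product, of exponent sum `n * (n - 1)`.
-/

section WordLength

variable {G : Type*} [Group G] {S : Set G} {g h u z : G}

/-- The word length of `g` with respect to `S`: the least length of a word in `S ∪ S⁻¹` with
product `g`. It has the junk value `0` outside the subgroup generated by `S`. -/
noncomputable def wordLength (S : Set G) (g : G) : ℕ :=
  sInf {k | ∃ L : List G, L.length = k ∧ (∀ a ∈ L, a ∈ S ∨ a⁻¹ ∈ S) ∧ L.prod = g}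

theorem exists_list_length_eq_wordLength (hg : g ∈ Subgroup.closure S) :
    ∃ L : List G, L.length = wordLength S g ∧ (∀ a ∈ L, a ∈ S ∨ a⁻¹ ∈ S) ∧ L.prod = g := by
  rw [← Subgroup.mem_toSubmonoid, Subgroup.closure_toSubmonoid] at hg
  obtain ⟨L, hL, hprod⟩ := Submonoid.exists_list_of_mem_closure hg
  have hword : {k | ∃ L : List G, L.length = k ∧ (∀ a ∈ L, a ∈ S ∨ a⁻¹ ∈ S) ∧
      L.prod = g}.Nonempty := ⟨L.length, L, rfl, hL, hprod⟩
  exact Nat.sInf_mem hword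

theorem wordLength_prod_le {L : List G} (hL : ∀ a ∈ L, a ∈ S ∨ a⁻¹ ∈ S) :
    wordLength S L.prod ≤ L.length :=
  Nat.sInf_le ⟨L, rfl, hL, rfl⟩

theorem wordLength_mul_le (hg : g ∈ Subgroup.closure S) (hh : h ∈ Subgroup.closure S) :
    wordLength S (g * h) ≤ wordLength S g + wordLength S h := by
  obtain ⟨L, hLlen, hL, rfl⟩ := exists_list_length_eq_wordLength hg
  obtain ⟨M, hMlen, hM, rfl⟩ := exists_list_length_eq_wordLength hh
  rw [← hLlen, ← hMlen, ← List.prod_append, ← List.length_append]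
  exact wordLength_prod_le (List.forall_mem_append.2 ⟨hL, hM⟩)

theorem abs_toAdd_list_prod_le {M : Type*} [Monoid M] (e : M →* Multiplicative ℤ) {L : List M}
    (hL : ∀ a ∈ L, |(e a).toAdd| ≤ 1) : |(e L.prod).toAdd| ≤ L.length := by
  induction L with
  | nil => simp
  | cons a L ih =>
    obtain ⟨ha, hL⟩ := List.forall_mem_cons.1 hL
    calc |(e (a :: L).prod).toAdd| = |(e a).toAdd + (e L.prod).toAdd| := by
          rw [List.prod_cons, map_mul, toAdd_mul]
      _ ≤ |(e a).toAdd| + |(e L.prod).toAdd| := abs_add_le _ _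
      _ ≤ 1 + L.length := add_le_add ha (ih hL)
      _ = (a :: L).length := by rw [List.length_cons, Nat.cast_succ, add_comm]

theorem abs_toAdd_le_wordLength {e : G →* Multiplicative ℤ} (he : ∀ s ∈ S, |(e s).toAdd| ≤ 1)
    (hg : g ∈ Subgroup.closure S) : |(e g).toAdd| ≤ wordLength S g := by
  obtain ⟨L, hlen, hL, rfl⟩ := exists_list_length_eq_wordLength hg
  rw [← hlen]
  refine abs_toAdd_list_prod_le e fun a ha => (hL a ha).elim (he a) fun ha' => ?_
  simpa only [map_inv, toAdd_inv, abs_neg] using he a⁻¹ ha'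

theorem wordLength_le_toAdd_of_mem_closure {e : G →* Multiplicative ℤ}
    (he : ∀ s ∈ S, 1 ≤ (e s).toAdd) (hz : z ∈ Submonoid.closure S) :
    (wordLength S z : ℤ) ≤ (e z).toAdd := by
  induction hz using Submonoid.closure_induction with
  | mem s hs =>
    have hlen : wordLength S s ≤ 1 := by
      simpa using wordLength_prod_le (L := [s]) (by simpa using Or.inl hs)
    exact (Nat.cast_le.2 hlen).trans (he s hs)
  | one => simpa using wordLength_prod_le (S := S) (L := [])
  | mul x y hx hy ihx ihy =>
    have hmul := wordLength_mul_le (Subgroup.le_closure_toSubmonoid S hx)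
      (Subgroup.le_closure_toSubmonoid S hy)
    calc (wordLength S (x * y) : ℤ) ≤ wordLength S x + wordLength S y := mod_cast hmul
      _ ≤ (e x).toAdd + (e y).toAdd := add_le_add ihx ihy
      _ = (e (x * y)).toAdd := by rw [map_mul, toAdd_mul]

theorem strictMono_wordLength_pow_mul {e : G →* Multiplicative ℤ}
    (he : ∀ s ∈ S, (e s).toAdd = 1) (hz : z ∈ Submonoid.closure S)
    (hu : u ∈ Subgroup.closure S) (huz : 2 * (wordLength S u : ℤ) < (e z).toAdd) :
    StrictMono fun p : ℕ => wordLength S (z ^ p * u) := by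
  have hpow (p : ℕ) : z ^ p ∈ Submonoid.closure S := pow_mem hz p
  have hpow' (p : ℕ) : z ^ p ∈ Subgroup.closure S := Subgroup.le_closure_toSubmonoid S (hpow p)
  have he_abs : ∀ s ∈ S, |(e s).toAdd| ≤ 1 := fun s hs => by rw [he s hs, abs_one]
  have hu_lower : -(wordLength S u : ℤ) ≤ (e u).toAdd :=
    neg_le_of_abs_le (abs_toAdd_le_wordLength he_abs hu)
  refine strictMono_nat_of_lt_succ fun p => Nat.cast_lt (α := ℤ).1 ?_
  calc (wordLength S (z ^ p * u) : ℤ) ≤ wordLength S (z ^ p) + wordLength S u :=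
        mod_cast wordLength_mul_le (hpow' p) hu
    _ ≤ (e (z ^ p)).toAdd + wordLength S u :=
        add_le_add_left (wordLength_le_toAdd_of_mem_closure (fun s hs => (he s hs).ge) (hpow p)) _
    _ = p * (e z).toAdd + wordLength S u := by rw [map_pow, toAdd_pow, nsmul_eq_mul]
    _ < (p + 1 : ℕ) * (e z).toAdd + (e u).toAdd := by push_cast; linarith
    _ = (e (z ^ (p + 1) * u)).toAdd := by
        rw [map_mul, map_pow, toAdd_mul, toAdd_pow, nsmul_eq_mul]
    _ ≤ |(e (z ^ (p + 1) * u)).toAdd| := le_abs_self _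
    _ ≤ wordLength S (z ^ (p + 1) * u) :=
        abs_toAdd_le_wordLength he_abs (mul_mem (hpow' (p + 1)) hu)

end WordLength

section Braid

variable (n : ℕ)

theorem geodesicLength_eq_wordLength (g : BraidGroup n) :
    geodesicLength n g = wordLength (Set.range (braidGen n)) g := by
  have mem_iff (a : BraidGroup n) : (∃ i, a = braidGen n i ∨ a = (braidGen n i)⁻¹) ↔
      a ∈ Set.range (braidGen n) ∨ a⁻¹ ∈ Set.range (braidGen n) := by
    simp only [exists_or, Set.mem_range, eq_comm (a := a), inv_eq_iff_eq_inv]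
  simp only [geodesicLength, wordLength, mem_iff]

/-- The exponent sum `B_n → ℤ`, which sends every Artin generator to `1`. Its values lie in
`Multiplicative ℤ` so that it is a homomorphism of multiplicative groups. -/
def exponentSum : BraidGroup n →* Multiplicative ℤ :=
  PresentedGroup.toGroup (f := fun _ => Multiplicative.ofAdd 1) (by
    rintro r ⟨i, j, ⟨_, rfl⟩ | ⟨_, rfl⟩⟩ <;> simp)

theorem exponentSum_braidGen (i : Fin (n - 1)) :
    exponentSum n (braidGen n i) = Multiplicative.ofAdd 1 :=
  PresentedGroup.toGroup.of _

theorem halfTwist_mem_closure : halfTwist n ∈ Submonoid.closure (Set.range (braidGen n)) := by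
  refine list_prod_mem (List.forall_mem_ofFn_iff.2 fun r => ?_)
  exact list_prod_mem (List.forall_mem_ofFn_iff.2 fun c => Submonoid.subset_closure ⟨_, rfl⟩)

theorem sum_fin_pred_sub_mul_two : (∑ r : Fin (n - 1), (n - 1 - (r : ℕ))) * 2 = n * (n - 1) := by
  rw [← Finset.sum_range_id_mul_two, ← Finset.sum_range_reflect,
    Fin.sum_univ_eq_sum_range (n - 1 - ·)]
  cases n with
  | zero => rfl
  | succ m => simp only [Nat.add_sub_cancel, Finset.sum_range_succ, Nat.sub_self, add_zero]

theorem toAdd_exponentSum_halfTwist :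
    (exponentSum n (halfTwist n)).toAdd = ∑ r : Fin (n - 1), ((n - 1 - (r : ℕ) : ℕ) : ℤ) := by
  simp only [halfTwist, map_list_prod, List.map_ofFn, Function.comp_def, List.prod_ofFn,
    exponentSum_braidGen, toAdd_prod, toAdd_ofAdd, Finset.sum_const, Finset.card_univ,
    Fintype.card_fin, nsmul_eq_mul, mul_one]

theorem toAdd_exponentSum_halfTwist_sq :
    (exponentSum n (halfTwist n ^ 2)).toAdd = (n * (n - 1) : ℕ) := by
  rw [map_pow, toAdd_pow, toAdd_exponentSum_halfTwist, ← sum_fin_pred_sub_mul_two, nsmul_eq_mul,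
    mul_comm, Nat.cast_mul, Nat.cast_sum]

end Braid

/-- If `u ∈ B_n` satisfies `2·ℓ(u) < n·(n-1)`, then the sequence
`p ↦ ℓ(Δ^{2p}·u)` (for natural numbers `p`) is strictly increasing. -/
theorem strictMono_geodesicLength_halfTwist_sq_pow_mul (n : ℕ) (hn : 2 ≤ n)
    (u : BraidGroup n) (hu : 2 * geodesicLength n u < n * (n - 1)) :
    StrictMono fun p : ℕ => geodesicLength n (halfTwist n ^ (2 * p) * u) := by
  have hz : halfTwist n ^ 2 ∈ Submonoid.closure (Set.range (braidGen n)) :=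
    pow_mem (halfTwist_mem_closure n) 2
  have hu_mem : u ∈ Subgroup.closure (Set.range (braidGen n)) :=
    (PresentedGroup.closure_range_of (braidRels n)).ge (Subgroup.mem_top u)
  have he : ∀ s ∈ Set.range (braidGen n), (exponentSum n s).toAdd = 1 :=
    Set.forall_mem_range.2 fun i => congrArg Multiplicative.toAdd (exponentSum_braidGen n i)
  simp only [geodesicLength_eq_wordLength, pow_mul] at hu ⊢
  refine strictMono_wordLength_pow_mul he hz hu_mem ?_
  rw [toAdd_exponentSum_halfTwist_sq]
  exact_mod_cast hu
end
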